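/- (Lemma 2: construction of the local subdomain.) There exists r > 0 such that for every ε ∈ (0, r) there exists a graph-type subdomain D = D(ε), determined by some ρ₁ ∈ (0, ρ₀) and some C² function ℓ̃ : closure(B_{ρ₁}) → ℝ with ℓ̃ > 0 on B_{ρ₁} and ℓ̃ = 0, ∇ℓ̃ = 0 on {|x'| = ρ₁}, with the following properties: D ⊂ Ω; diam(D) < ε; 0 ∈ ∂D ∩ ∂Ω; the upper graph {(x', ℓ(x')) : |x'| < ρ₁} is contained in Γ ∩ ∂D; and for every H ∈ 𝓗 one has ⟨H(x', ℓ(x') − ℓ̃(x')), ν₂(x')⟩ ≤ 0 for all |x'| < ρ₁ (that is, H·ν ≤ 0 on ∂D ∖ Γ). Here r depends only on n, M, δ₀, ρ₀ and the C² norm of ℓ, and D is independent of the individual H ∈ 𝓗. -/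

import Mathlib

noncomputable section

open MeasureTheory Metric Set
open scoped RealInnerProductSpace

abbrev Esp (n : ℕ) : Type := EuclideanSpace ℝ (Fin n)

/-- The point `(x', xₙ) ∈ ℝ^{d+1} = ℝ^d × ℝ`. -/
noncomputable def graphMk (d : ℕ) (x' : Esp d) (xn : ℝ) : Esp (d+1) :=
  (EuclideanSpace.equiv (Fin (d+1)) ℝ).symm
    (Fin.snoc (⇑(EuclideanSpace.equiv (Fin d) ℝ) x') xn)

/-- `H` is `(M, δ₀)`-admissible on the compact set `K`. -/
def IsAdmissible {n : ℕ} (M δ₀ : ℝ) (K : Set (Esp n)) (H : Esp n → Esp n) : Prop :=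
  ∃ U : Set (Esp n), IsOpen U ∧ Convex ℝ U ∧ K ⊆ U ∧ ContDiffOn ℝ 1 H U ∧
    (∀ x ∈ U, ‖H x‖ ≤ M) ∧ (∀ x ∈ U, ‖fderiv ℝ H x‖ ≤ M) ∧ (∀ x ∈ K, δ₀ < ‖H x‖)

/-- `ψ_H(x) = ⟨x, H(x)⟩`. -/
noncomputable def psiW {n : ℕ} (H : Esp n → Esp n) (x : Esp n) : ℝ := ⟪x, H x⟫

/-- The Carleman weight `φ_H(x,t) = -βt + ψ_H(x)`. -/
noncomputable def phiW {n : ℕ} (β : ℝ) (H : Esp n → Esp n) (x : Esp n) (t : ℝ) : ℝ :=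
  -(β * t) + psiW H x

/-- Outward unit normal `ν₁` of the upper graph `xₙ = ℓ(x')`. -/
noncomputable def nuUp (d : ℕ) (ℓ : Esp d → ℝ) (x' : Esp d) : Esp (d+1) :=
  (Real.sqrt (1 + ‖gradient ℓ x'‖ ^ 2))⁻¹ • graphMk d (-(gradient ℓ x')) 1

/-- Outward unit normal `ν₂` of the lower graph `xₙ = m(x')`. -/
noncomputable def nuDown (d : ℕ) (m : Esp d → ℝ) (x' : Esp d) : Esp (d+1) :=
  (Real.sqrt (1 + ‖gradient m x'‖ ^ 2))⁻¹ • graphMk d (gradient m x') (-1)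

/-- Area element `ω(x') = √(1 + |∇m(x')|²)` of the graph of `m`. -/
noncomputable def omegaW (d : ℕ) (m : Esp d → ℝ) (x' : Esp d) : ℝ :=
  Real.sqrt (1 + ‖gradient m x'‖ ^ 2)

/-- The graph domain `D = {(x', xₙ) : |x'| < ρ₁, ℓ(x') − ℓ̃(x') < xₙ < ℓ(x')}`. -/
def graphDomain (d : ℕ) (ρ₁ : ℝ) (ℓ ℓt : Esp d → ℝ) : Set (Esp (d+1)) :=
  {x | ∃ x' : Esp d, ∃ xn : ℝ, ‖x'‖ < ρ₁ ∧ ℓ x' - ℓt x' < xn ∧ xn < ℓ x' ∧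
    x = graphMk d x' xn}


lemma graphMk_sub (d : ℕ) (x y : Esp d) (s t : ℝ) :
    graphMk d x s - graphMk d y t = graphMk d (x - y) (s - t) := by
  ext i
  refine Fin.lastCases ?_ (fun j => ?_) i <;> simp [graphMk]

lemma graphMk_neg (d : ℕ) (x : Esp d) (t : ℝ) : -graphMk d x t = graphMk d (-x) (-t) := by
  ext i
  refine Fin.lastCases ?_ (fun j => ?_) i <;> simp [graphMk]

lemma graphMk_zero (d : ℕ) : graphMk d 0 0 = 0 := by
  ext i
  refine Fin.lastCases ?_ (fun j => ?_) i <;> simp [graphMk]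

lemma norm_graphMk_sq (d : ℕ) (x : Esp d) (t : ℝ) : ‖graphMk d x t‖ ^ 2 = ‖x‖ ^ 2 + t ^ 2 := by
  simp [EuclideanSpace.norm_sq_eq, Fin.sum_univ_castSucc, graphMk]

lemma norm_graphMk_le (d : ℕ) (x : Esp d) (t : ℝ) : ‖graphMk d x t‖ ≤ ‖x‖ + |t| := by
  refine abs_le_of_sq_le_sq' ?_ (by positivity) |>.2
  rw [norm_graphMk_sq]
  nlinarith [norm_nonneg x, abs_nonneg t, sq_abs t, mul_nonneg (norm_nonneg x) (abs_nonneg t)]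

lemma graphMk_injective {d : ℕ} {x y : Esp d} {s t : ℝ} (h : graphMk d x s = graphMk d y t) :
    x = y ∧ s = t := by
  have h0 : ‖x - y‖ ^ 2 + (s - t) ^ 2 = 0 := by
    rw [← norm_graphMk_sq, ← graphMk_sub, h, sub_self, norm_zero, zero_pow two_ne_zero]
  have h1 : ‖x - y‖ ^ 2 = 0 := by nlinarith [sq_nonneg ‖x - y‖, sq_nonneg (s - t)]
  have h2 : (s - t) ^ 2 = 0 := by nlinarith [sq_nonneg ‖x - y‖, sq_nonneg (s - t)]
  exact ⟨sub_eq_zero.1 (norm_eq_zero.1 (pow_eq_zero_iff two_ne_zero |>.1 h1)),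
    sub_eq_zero.1 (pow_eq_zero_iff two_ne_zero |>.1 h2)⟩

/-- A point is in the closure of a set containing a vertical segment just below it. -/
lemma graphMk_mem_closure {d : ℕ} {S : Set (Esp (d+1))} {x : Esp d} {a b : ℝ} (hab : a < b)
    (h : ∀ t, a < t → t < b → graphMk d x t ∈ S) : graphMk d x b ∈ closure S := by
  refine Metric.mem_closure_iff.2 fun ε hε => ?_
  have hlt : max a (b - ε) < b := max_lt hab (by linarith)
  obtain ⟨t, ht, htb⟩ := exists_between hlt
  refine ⟨graphMk d x t, h t ((le_max_left _ _).trans_lt ht) htb, ?_⟩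
  rw [dist_eq_norm, graphMk_sub, sub_self]
  refine (norm_graphMk_le d 0 (b - t)).trans_lt ?_
  rw [norm_zero, zero_add, abs_of_pos (by linarith)]
  linarith [(le_max_right a (b - ε)).trans_lt ht]

/-- The profile `(ρ² - |x|²)²` of the local subdomain. -/
def bumpProfile (d : ℕ) (ρ : ℝ) (x : Esp d) : ℝ := (ρ ^ 2 - ‖x‖ ^ 2) ^ 2

lemma contDiff_bumpProfile (d : ℕ) (ρ : ℝ) : ContDiff ℝ 2 (bumpProfile d ρ) :=
  (contDiff_const.sub (contDiff_norm_sq ℝ)).pow 2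

lemma hasGradientAt_bumpProfile (d : ℕ) (ρ : ℝ) (x : Esp d) :
    HasGradientAt (bumpProfile d ρ) ((-4 * (ρ ^ 2 - ‖x‖ ^ 2)) • x) x := by
  rw [hasGradientAt_iff_hasFDerivAt]
  have h := ((hasFDerivAt_const (ρ ^ 2) x).sub (hasStrictFDerivAt_norm_sq x).hasFDerivAt).pow 2
  refine h.congr_fderiv ?_
  ext y
  simp
  ring

lemma bumpProfile_pos {d : ℕ} {ρ : ℝ} {x : Esp d} (hx : ‖x‖ < ρ) : 0 < bumpProfile d ρ x := by
  have : 0 < ρ ^ 2 - ‖x‖ ^ 2 := by nlinarith [norm_nonneg x]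
  exact pow_pos this 2

lemma bumpProfile_le {d : ℕ} {ρ : ℝ} {x : Esp d} (hx : ‖x‖ < ρ) (hρ : ρ ≤ 1) :
    bumpProfile d ρ x ≤ ρ := by
  have h0 := norm_nonneg x
  have h1 : 0 ≤ ρ ^ 2 - ‖x‖ ^ 2 := by nlinarith
  have h2 : ρ ^ 2 - ‖x‖ ^ 2 ≤ ρ := by nlinarith
  unfold bumpProfile
  nlinarith

lemma norm_gradient_bumpProfile_le {d : ℕ} {ρ : ℝ} {x : Esp d} (hx : ‖x‖ < ρ) (hρ : ρ ≤ 1) :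
    ‖gradient (bumpProfile d ρ) x‖ ≤ 4 * ρ := by
  have h0 := norm_nonneg x
  have h1 : 0 ≤ ρ ^ 2 - ‖x‖ ^ 2 := by nlinarith
  have h2 : ρ ^ 2 - ‖x‖ ^ 2 ≤ 1 := by nlinarith
  rw [(hasGradientAt_bumpProfile d ρ x).gradient, norm_smul, norm_mul, Real.norm_of_nonneg h1]
  norm_num
  nlinarith

lemma gradient_sub_bumpProfile {d : ℕ} {ρ : ℝ} {f : Esp d → ℝ} {x : Esp d}
    (hf : DifferentiableAt ℝ f x) :
    gradient (fun z => f z - bumpProfile d ρ z) x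
      = gradient f x - gradient (bumpProfile d ρ) x := by
  have hb : DifferentiableAt ℝ (bumpProfile d ρ) x :=
    (contDiff_bumpProfile d ρ).differentiable (by norm_num) x
  unfold gradient
  rw [fderiv_fun_sub hf hb, map_sub]

lemma graphMk_mem_frontier_graphDomain {d : ℕ} {ρ : ℝ} {ℓ ℓt : Esp d → ℝ} {x : Esp d}
    (hx : ‖x‖ < ρ) (ht : 0 < ℓt x) :
    graphMk d x (ℓ x) ∈ frontier (graphDomain d ρ ℓ ℓt) := by
  refine ⟨graphMk_mem_closure (a := ℓ x - ℓt x) (by linarith)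
    fun t h1 h2 => ⟨x, t, hx, h1, h2, rfl⟩, fun h => ?_⟩
  obtain ⟨y, t, -, -, h2, h⟩ := interior_subset h
  obtain ⟨rfl, rfl⟩ := graphMk_injective h
  exact lt_irrefl _ h2

/-- An admissible field is `M`-Lipschitz on `K`. -/
lemma IsAdmissible.norm_sub_le {n : ℕ} {M δ₀ : ℝ} {K : Set (Esp n)} {H : Esp n → Esp n}
    (hH : IsAdmissible M δ₀ K H) {x y : Esp n} (hx : x ∈ K) (hy : y ∈ K) :
    ‖H y - H x‖ ≤ M * ‖y - x‖ := by
  obtain ⟨U, hUo, hUc, hKU, hHd, -, hDH, -⟩ := hH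
  exact hUc.norm_image_sub_le_of_norm_fderiv_le
    (fun z hz => (hHd.differentiableOn (by norm_num)).differentiableAt (hUo.mem_nhds hz))
    hDH (hKU hx) (hKU hy)

lemma IsAdmissible.norm_le {n : ℕ} {M δ₀ : ℝ} {K : Set (Esp n)} {H : Esp n → Esp n}
    (hH : IsAdmissible M δ₀ K H) {x : Esp n} (hx : x ∈ K) : ‖H x‖ ≤ M := by
  obtain ⟨U, -, -, hKU, -, hM, -, -⟩ := hH
  exact hM x (hKU hx)

lemma lt_inner_of_lt_inner_nuUp {d : ℕ} {δ₀ : ℝ} (hδ₀ : 0 < δ₀) {ℓ : Esp d → ℝ} {x : Esp d}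
    {v : Esp (d+1)} (h : δ₀ < ⟪v, nuUp d ℓ x⟫) : δ₀ < ⟪v, graphMk d (-gradient ℓ x) 1⟫ := by
  rw [nuUp, inner_smul_right] at h
  have hs : 1 ≤ √(1 + ‖gradient ℓ x‖ ^ 2) :=
    Real.one_le_sqrt.2 (by nlinarith [sq_nonneg ‖gradient ℓ x‖])
  have hs0 := lt_of_lt_of_le one_pos hs
  rw [inv_mul_eq_div, lt_div_iff₀ hs0] at h
  nlinarith

/-- Transversality at one point persists under small perturbations of field and gradient. -/
lemma inner_graphMk_nonpos {d : ℕ} {M δ₀ : ℝ} (hM : 0 < M) {v v₀ : Esp (d+1)} {g g₀ : Esp d}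
    (hv₀ : δ₀ < ⟪v₀, graphMk d (-g₀) 1⟫) (hv : ‖v‖ ≤ M)
    (hdv : ‖v - v₀‖ * (‖g₀‖ + 1) ≤ δ₀ / 2) (hdg : M * ‖g - g₀‖ ≤ δ₀ / 2) :
    ⟪v, graphMk d g (-1)⟫ ≤ 0 := by
  have hneg : graphMk d (-g₀) 1 = -graphMk d g₀ (-1) := by rw [graphMk_neg, neg_neg]
  rw [hneg, inner_neg_right] at hv₀
  have hsplit : ⟪v, graphMk d g (-1)⟫ = ⟪v₀, graphMk d g₀ (-1)⟫
      + ⟪v - v₀, graphMk d g₀ (-1)⟫ + ⟪v, graphMk d (g - g₀) 0⟫ := by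
    rw [← sub_self (-1 : ℝ), ← graphMk_sub, inner_sub_left, inner_sub_right]
    ring
  have h1 : ⟪v - v₀, graphMk d g₀ (-1)⟫ ≤ δ₀ / 2 := by
    refine (real_inner_le_norm _ _).trans (le_trans ?_ hdv)
    gcongr
    simpa using norm_graphMk_le d g₀ (-1)
  have h2 : ⟪v, graphMk d (g - g₀) 0⟫ ≤ δ₀ / 2 := by
    refine (real_inner_le_norm _ _).trans (le_trans ?_ hdg)
    gcongr
    simpa using norm_graphMk_le d (g - g₀) 0
  linarith

/-- Near `0` both the values and the gradient of a `C²` function are close to those at `0`. -/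
lemma exists_small_oscillation {d : ℕ} {ρ₀ : ℝ} (hρ₀ : 0 < ρ₀) {ℓ : Esp d → ℝ}
    (hℓ : ContDiffOn ℝ 2 ℓ (closedBall 0 ρ₀)) (hℓ0 : ℓ 0 = 0) {a b : ℝ} (ha : 0 < a)
    (hb : 0 < b) :
    ∃ σ > 0, ∀ x : Esp d, ‖x‖ < σ → |ℓ x| < a ∧ ‖gradient ℓ x - gradient ℓ 0‖ < b := by
  have hat : ContDiffAt ℝ 2 ℓ 0 := hℓ.contDiffAt (closedBall_mem_nhds 0 hρ₀)
  have hg : ContinuousAt (gradient ℓ) 0 :=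
    (InnerProductSpace.toDual ℝ (Esp d)).symm.continuous.continuousAt.comp
      (hat.fderiv_right (m := 1) (by norm_num)).continuousAt
  obtain ⟨σ₁, h1, h1'⟩ := Metric.continuousAt_iff.1 hat.continuousAt a ha
  obtain ⟨σ₂, h2, h2'⟩ := Metric.continuousAt_iff.1 hg b hb
  refine ⟨min σ₁ σ₂, lt_min h1 h2, fun x hx => ⟨?_, ?_⟩⟩
  · have := h1' (x := x) (by simpa using hx.trans_le (min_le_left _ _))
    simpa [hℓ0, Real.dist_eq] using this
  · have := h2' (x := x) (by simpa using hx.trans_le (min_le_right _ _))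
    rwa [dist_eq_norm] at this

/-- **Lemma 2** (construction of the local subdomain). -/
theorem lemma2_construction_local_subdomain
    (d : ℕ) (hd : 1 ≤ d) (ρ₀ M δ₀ c : ℝ)
    (hρ₀ : 0 < ρ₀) (hM : 0 < M) (hδ₀ : 0 < δ₀) (hc : 0 < c)
    (ℓ : Esp d → ℝ) (hℓ : ContDiffOn ℝ 2 ℓ (closedBall 0 ρ₀)) (hℓ0 : ℓ 0 = 0)
    (Ω : Set (Esp (d+1))) (hΩo : IsOpen Ω) (hΩb : Bornology.IsBounded Ω)
    (hΩsub : ∀ (x' : Esp d) (xn : ℝ), ‖x'‖ < ρ₀ → ℓ x' - c < xn → xn < ℓ x' →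
      graphMk d x' xn ∈ Ω)
    (hΩdis : ∀ (x' : Esp d) (xn : ℝ), ‖x'‖ < ρ₀ → ℓ x' ≤ xn → xn < ℓ x' + c →
      graphMk d x' xn ∉ Ω)
 :
    ∃ r > (0:ℝ), ∀ ε ∈ Set.Ioo (0:ℝ) r, ∃ ρ₁ ∈ Set.Ioo 0 ρ₀, ∃ ℓt : Esp d → ℝ,
      ContDiffOn ℝ 2 ℓt (closedBall 0 ρ₁) ∧
      (∀ x' : Esp d, ‖x'‖ < ρ₁ → 0 < ℓt x') ∧
      (∀ x' : Esp d, ‖x'‖ = ρ₁ → ℓt x' = 0 ∧ gradient ℓt x' = 0) ∧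
      graphDomain d ρ₁ ℓ ℓt ⊆ Ω ∧
      Metric.diam (graphDomain d ρ₁ ℓ ℓt) < ε ∧
      (0 : Esp (d+1)) ∈ frontier (graphDomain d ρ₁ ℓ ℓt) ∩ frontier Ω ∧
      (∀ x' : Esp d, ‖x'‖ < ρ₁ →
        graphMk d x' (ℓ x') ∈
          {y : Esp (d+1) | ∃ z : Esp d, ‖z‖ < ρ₀ ∧ y = graphMk d z (ℓ z)} ∩
            frontier (graphDomain d ρ₁ ℓ ℓt)) ∧
      ∀ H : Esp (d+1) → Esp (d+1),
        IsAdmissible M δ₀ (closure Ω) H → δ₀ < ⟪H 0, nuUp d ℓ 0⟫ →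
        ∀ x' : Esp d, ‖x'‖ < ρ₁ →
          ⟪H (graphMk d x' (ℓ x' - ℓt x')), nuDown d (fun z => ℓ z - ℓt z) x'⟫ ≤ 0 := by
  refine ⟨1, one_pos, fun ε hε => ?_⟩
  have hε0 : 0 < ε := hε.1
  set A : ℝ := ‖gradient ℓ 0‖ + 1
  have hA0 : 0 < A := by positivity
  obtain ⟨η, hη0, hηε, hηA⟩ : ∃ η > 0, η ≤ ε / 3 ∧ M * η * A ≤ δ₀ / 2 := by
    refine ⟨min (ε / 3) (δ₀ / (2 * M * A)), by positivity, min_le_left _ _, ?_⟩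
    calc M * min (ε / 3) (δ₀ / (2 * M * A)) * A ≤ M * (δ₀ / (2 * M * A)) * A := by
          gcongr
          exact min_le_right _ _
      _ = δ₀ / 2 := by field_simp
  obtain ⟨γ, hγ0, hγ⟩ : ∃ γ > 0, M * γ = δ₀ / 2 := ⟨δ₀ / (2 * M), by positivity, by field_simp⟩
  obtain ⟨σ, hσ0, hσ⟩ :=
    exists_small_oscillation hρ₀ hℓ hℓ0 (by positivity : 0 < η / 4) (by positivity : 0 < γ / 2)
  obtain ⟨ρ, hρ, hρρ₀, hρ1, hρσ, hρc, hρη, hργ⟩ : ∃ ρ > 0, ρ < ρ₀ ∧ ρ ≤ 1 ∧ ρ ≤ σ ∧ ρ < c ∧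
      ρ ≤ η / 4 ∧ ρ ≤ γ / 8 := by
    have hpos : 0 < min (min (min ρ₀ 1) (min σ c)) (min (η / 4) (γ / 8)) := by positivity
    obtain ⟨ρ, h0, h⟩ := exists_between hpos
    simp only [lt_min_iff] at h
    exact ⟨ρ, h0, h.1.1.1, h.1.1.2.le, h.1.2.1.le, h.1.2.2, h.2.1.le, h.2.2.le⟩
  have hΩ0 : (0 : Esp (d+1)) ∈ frontier Ω := by
    rw [← graphMk_zero]
    refine ⟨graphMk_mem_closure (a := -c) (by linarith) fun t h1 h2 =>
      hΩsub 0 t (by simpa) (by linarith) (by linarith), fun h => ?_⟩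
    exact hΩdis 0 0 (by simpa) hℓ0.le (by linarith) (interior_subset h)
  have hnorm : ∀ x : Esp d, ‖x‖ < ρ → ∀ t, ℓ x - bumpProfile d ρ x ≤ t → t ≤ ℓ x →
      ‖graphMk d x t‖ ≤ η := by
    intro x hx t h1 h2
    have hb := bumpProfile_le hx hρ1
    have hl := abs_lt.1 (hσ x (hx.trans_le hρσ)).1
    have ht : |t| ≤ η / 2 := abs_le.2 ⟨by linarith, by linarith⟩
    linarith [norm_graphMk_le d x t]
  refine ⟨ρ, ⟨hρ, hρρ₀⟩, bumpProfile d ρ, (contDiff_bumpProfile d ρ).contDiffOn,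
    fun x hx => bumpProfile_pos hx, fun x hx => ⟨by simp [bumpProfile, hx], ?_⟩, ?_, ?_,
    ⟨?_, hΩ0⟩, fun x hx => ⟨⟨x, hx.trans hρρ₀, rfl⟩,
      graphMk_mem_frontier_graphDomain hx (bumpProfile_pos hx)⟩, ?_⟩
  · rw [(hasGradientAt_bumpProfile d ρ x).gradient]
    simp [hx]
  · rintro _ ⟨x, t, hx, h1, h2, rfl⟩
    exact hΩsub x t (hx.trans hρρ₀) (by linarith [bumpProfile_le hx hρ1]) h2
  · have hsub : graphDomain d ρ ℓ (bumpProfile d ρ) ⊆ closedBall 0 η := by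
      rintro _ ⟨x, t, hx, h1, h2, rfl⟩
      exact mem_closedBall_zero_iff.2 (hnorm x hx t h1.le h2.le)
    have := (diam_mono hsub isBounded_closedBall).trans (diam_closedBall hη0.le)
    linarith
  · have := graphMk_mem_frontier_graphDomain (ℓ := ℓ) (x := (0 : Esp d)) (by simpa)
      (bumpProfile_pos (d := d) (ρ := ρ) (by simpa))
    rwa [hℓ0, graphMk_zero] at this
  · intro H hH hH0 x hx
    have hbpos := bumpProfile_pos hx
    have hble := bumpProfile_le hx hρ1
    have hy : graphMk d x (ℓ x - bumpProfile d ρ x) ∈ closure Ω :=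
      subset_closure (hΩsub x _ (hx.trans hρρ₀) (by linarith) (by linarith))
    have hdiff : DifferentiableAt ℝ ℓ x :=
      (hℓ.contDiffAt (closedBall_mem_nhds_of_mem
        (mem_ball_zero_iff.2 (hx.trans hρρ₀)))).differentiableAt (by norm_num)
    have hlip := hH.norm_sub_le (frontier_subset_closure hΩ0) hy
    rw [sub_zero] at hlip
    have hyη := hnorm x hx _ le_rfl (by linarith)
    rw [nuDown, inner_smul_right]
    refine mul_nonpos_of_nonneg_of_nonpos (by positivity)
      (inner_graphMk_nonpos hM (lt_inner_of_lt_inner_nuUp hδ₀ hH0) (hH.norm_le hy) ?_ ?_)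
    · refine le_trans ?_ hηA
      gcongr
      exact hlip.trans (by gcongr)
    · rw [gradient_sub_bumpProfile hdiff, ← hγ, sub_right_comm]
      gcongr
      have h1 := (hσ x (hx.trans_le hρσ)).2
      have h2 := norm_gradient_bumpProfile_le hx hρ1
      linarith [norm_sub_le (gradient ℓ x - gradient ℓ 0) (gradient (bumpProfile d ρ) x)]
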